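/- Let α ∈ (0,1), let X = (X_1,…,X_n) be α-concentrated, and write S = X_1 + ⋯ + X_n. If β ↦ VaR_β(S) is left continuous at α and VaR_β(S) > VaR_α(S) for all β ∈ (0,α), then DQ^VaR_α(X) = 1. Similarly, if the X_i are integrable and ES_β(S) > ES_α(S) for all β ∈ (0,α), then DQ^ES_α(X) = 1. -/

import Mathlib

open MeasureTheory ProbabilityTheory Filter Set

namespace DQ

variable {Ω : Type*} [MeasurableSpace Ω]

/-- An atomless probability measure: every non-null measurable set has a measurable
subset of strictly smaller positive measure. -/
def Atomless (P : Measure Ω) : Prop :=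
  ∀ A : Set Ω, MeasurableSet A → 0 < P A →
    ∃ B, MeasurableSet B ∧ B ⊆ A ∧ 0 < P B ∧ P B < P A

/-- Value-at-Risk at level `α` (small-`α` convention):
`VaR_α(X) = inf {x | P(X ≤ x) ≥ 1 - α}`. -/
noncomputable def VaR (P : Measure Ω) (α : ℝ) (X : Ω → ℝ) : ℝ :=
  sInf {x : ℝ | 1 - α ≤ (P {ω | X ω ≤ x}).toReal}

/-- Expected Shortfall at level `α`: `ES_α(X) = (1/α) ∫_0^α VaR_β(X) dβ`. -/
noncomputable def ES (P : Measure Ω) (α : ℝ) (X : Ω → ℝ) : ℝ :=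
  (1 / α) * ∫ β in Set.Ioo (0 : ℝ) α, VaR P β X

/-- `α* = inf {β ∈ (0,1) | VaR_β(∑ Xᵢ) ≤ ∑ VaR_α(Xᵢ)}`, with `inf ∅ = 1`. -/
noncomputable def alphaStarVaR (P : Measure Ω) (α : ℝ) {n : ℕ} (X : Fin n → Ω → ℝ) : ℝ :=
  sInf ({β ∈ Set.Ioo (0 : ℝ) 1 |
    VaR P β (fun ω => ∑ i, X i ω) ≤ ∑ i, VaR P α (X i)} ∪ {1})

/-- Diversification quotient based on VaR: `DQ^VaR_α(X) = α*/α`. -/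
noncomputable def DQVaR (P : Measure Ω) (α : ℝ) {n : ℕ} (X : Fin n → Ω → ℝ) : ℝ :=
  alphaStarVaR P α X / α

/-- `α* = inf {β ∈ (0,1) | ES_β(∑ Xᵢ) ≤ ∑ ES_α(Xᵢ)}`, with `inf ∅ = 1`. -/
noncomputable def alphaStarES (P : Measure Ω) (α : ℝ) {n : ℕ} (X : Fin n → Ω → ℝ) : ℝ :=
  sInf ({β ∈ Set.Ioo (0 : ℝ) 1 |
    ES P β (fun ω => ∑ i, X i ω) ≤ ∑ i, ES P α (X i)} ∪ {1})

/-- Diversification quotient based on ES: `DQ^ES_α(X) = α*/α`. -/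
noncomputable def DQES (P : Measure Ω) (α : ℝ) {n : ℕ} (X : Fin n → Ω → ℝ) : ℝ :=
  alphaStarES P α X / α

end DQ

namespace DQ

variable {Ω : Type*} [MeasurableSpace Ω]

/-- `A` is a tail event of `X`: `0 < P(A) < 1` and, off a null set,
`X(ω) ≥ X(ω')` for all `ω ∈ A` and `ω' ∈ Aᶜ`. -/
def TailEvent (P : Measure Ω) (X : Ω → ℝ) (A : Set Ω) : Prop :=
  MeasurableSet A ∧ 0 < P A ∧ P A < 1 ∧
  ∃ N : Set Ω, P N = 0 ∧ ∀ ω ∈ A \ N, ∀ ω' ∈ Aᶜ \ N, X ω' ≤ X ω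

/-- `(X₁,…,Xₙ)` is `α`-concentrated: the components share a common tail event of
probability `α`. -/
def Concentrated (P : Measure Ω) {n : ℕ} (X : Fin n → Ω → ℝ) (α : ℝ) : Prop :=
  ∃ A : Set Ω, P A = ENNReal.ofReal α ∧ ∀ i, TailEvent P (X i) A

end DQ

/-!
For an `α`-concentrated vector with common tail event `A`, the level `VaR_α(Xᵢ)` separates the
values of `Xᵢ` on `Aᶜ` from those on `A`, and `A` is a tail event of the sum `S` as well. Summing
the bounds gives `VaR_α(S) ≤ ∑ VaR_α(Xᵢ) ≤ VaR_β(S)` for all `β < α`, so left continuity makes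
`VaR_α` additive on `X`. On the other hand `β ↦ VaR_β(X)` on `(0, 1)` has the law of `X`, whence
`α ES_α(X) = α VaR_α(X) + E[(X - VaR_α(X))⁺]`; if `A` is a tail event of `X` with `P(A) = α`, this
is `E[X 1_A]`, which is linear in `X`. Once the risk measure is additive on `X`, its being strictly
larger at every level `β < α` than at `α` forces `α* = α`.
-/

namespace DQ

theorem sInf_cdf_le_iff (μ : Measure ℝ) {p : ℝ} (hp : p ∈ Ioo (0 : ℝ) 1) (x : ℝ) :
    sInf {y | p ≤ cdf μ y} ≤ x ↔ p ≤ cdf μ x := by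
  have nonempty : {y | p ≤ cdf μ y}.Nonempty :=
    ((tendsto_cdf_atTop μ).eventually_const_le hp.2).exists
  have bddBelow : BddBelow {y | p ≤ cdf μ y} := by
    obtain ⟨b, hb⟩ := ((tendsto_cdf_atBot μ).eventually_lt_const hp.1).exists
    exact ⟨b, fun y hy => ((cdf μ).mono.reflect_lt (hb.trans_le hy)).le⟩
  refine ⟨fun h => ?_, fun h => csInf_le bddBelow h⟩
  have right_limit : Tendsto (cdf μ) (nhdsWithin x (Ioi x)) (nhds (cdf μ x)) :=
    ((cdf μ).right_continuous x).mono_left (nhdsWithin_mono _ Ioi_subset_Ici_self)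
  refine ge_of_tendsto right_limit ?_
  filter_upwards [self_mem_nhdsWithin] with y hxy
  obtain ⟨z, hz, hzy⟩ := exists_lt_of_csInf_lt nonempty (h.trans_lt hxy)
  exact hz.trans ((cdf μ).mono hzy.le)

theorem sInf_levels_eq {γ : Type*} [Preorder γ] {f : ℝ → γ} {c : γ} {α : ℝ}
    (hα : α ∈ Ioo (0 : ℝ) 1) (hle : f α ≤ c) (hlt : ∀ β ∈ Ioo 0 α, c < f β) :
    sInf ({β ∈ Ioo (0 : ℝ) 1 | f β ≤ c} ∪ {1}) = α := by
  refine IsLeast.csInf_eq ⟨Or.inl ⟨hα, hle⟩, ?_⟩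
  rintro β (⟨hβ, hβc⟩ | rfl)
  · exact not_lt.1 fun hβα => (hlt β ⟨hβ.1, hβα⟩).not_ge hβc
  · exact hα.2.le

variable {Ω : Type*} [MeasurableSpace Ω] {P : Measure Ω}

section RandomVector

variable {n : ℕ} {X : Fin n → Ω → ℝ} {α : ℝ}

theorem DQVaR_eq_one_of_VaR_sum_eq (hα : α ∈ Ioo (0 : ℝ) 1)
    (hadd : VaR P α (fun ω => ∑ i, X i ω) = ∑ i, VaR P α (X i))
    (hlt : ∀ β ∈ Ioo 0 α, VaR P α (fun ω => ∑ i, X i ω) < VaR P β (fun ω => ∑ i, X i ω)) :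
    DQVaR P α X = 1 := by
  rw [DQVaR, alphaStarVaR, sInf_levels_eq hα hadd.le (hadd ▸ hlt), div_self hα.1.ne']

theorem DQES_eq_one_of_ES_sum_eq (hα : α ∈ Ioo (0 : ℝ) 1)
    (hadd : ES P α (fun ω => ∑ i, X i ω) = ∑ i, ES P α (X i))
    (hlt : ∀ β ∈ Ioo 0 α, ES P α (fun ω => ∑ i, X i ω) < ES P β (fun ω => ∑ i, X i ω)) :
    DQES P α X = 1 := by
  rw [DQES, alphaStarES, sInf_levels_eq hα hadd.le (hadd ▸ hlt), div_self hα.1.ne']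

theorem tailEvent_sum {ι : Type*} [Fintype ι] {X : ι → Ω → ℝ} {A : Set Ω}
    (hA : MeasurableSet A) (hpos : 0 < P A) (hlt : P A < 1) (hT : ∀ i, TailEvent P (X i) A) :
    TailEvent P (fun ω => ∑ i, X i ω) A := by
  choose N hN hle using fun i => (hT i).2.2.2
  refine ⟨hA, hpos, hlt, ⋃ i, N i, measure_iUnion_null hN, ?_⟩
  rintro ω ⟨hωA, hωN⟩ ω' ⟨hω'A, hω'N⟩
  simp only [mem_iUnion, not_exists] at hωN hω'N
  exact Finset.sum_le_sum fun i _ => hle i ω ⟨hωA, hωN i⟩ ω' ⟨hω'A, hω'N i⟩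

theorem Concentrated.exists_measurableSet (h : Concentrated P X α) :
    ∃ A, MeasurableSet A ∧ P A = ENNReal.ofReal α ∧ ∀ i, TailEvent P (X i) A := by
  obtain ⟨A, hPA, hT⟩ := h
  rcases isEmpty_or_nonempty (Fin n) with _ | ⟨⟨i⟩⟩
  · -- For `n = 0` the set `A` is not forced to be measurable.
    exact ⟨toMeasurable P A, measurableSet_toMeasurable P A, by rw [measure_toMeasurable, hPA],
      isEmptyElim⟩
  · exact ⟨A, (hT i).1, hPA, hT⟩

theorem Concentrated.exists_tailEvent_sum (h : Concentrated P X α) (hα : α ∈ Ioo (0 : ℝ) 1) :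
    ∃ A, P.real A = α ∧ (∀ i, TailEvent P (X i) A) ∧ TailEvent P (fun ω => ∑ i, X i ω) A := by
  obtain ⟨A, hA, hPA, hT⟩ := h.exists_measurableSet
  have hPA_real : P.real A = α := by rw [Measure.real, hPA, ENNReal.toReal_ofReal hα.1.le]
  refine ⟨A, hPA_real, hT, tailEvent_sum hA ?_ ?_ hT⟩
  · rw [hPA]
    exact ENNReal.ofReal_pos.2 hα.1
  · rw [hPA]
    exact ENNReal.ofReal_lt_one.2 hα.2

end RandomVector

variable [IsProbabilityMeasure P] {X : Ω → ℝ} {A : Set Ω}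

theorem cdf_map_eq (hX : AEMeasurable X P) (x : ℝ) :
    cdf (P.map X) x = P.real {ω | X ω ≤ x} := by
  have := Measure.isProbabilityMeasure_map hX
  rw [cdf_eq_real, map_measureReal_apply_of_aemeasurable hX measurableSet_Iic]
  rfl

theorem VaR_le_iff (hX : AEMeasurable X P) {β : ℝ} (hβ : β ∈ Ioo (0 : ℝ) 1) (x : ℝ) :
    VaR P β X ≤ x ↔ 1 - β ≤ P.real {ω | X ω ≤ x} := by
  have hβ' : 1 - β ∈ Ioo (0 : ℝ) 1 := ⟨sub_pos.2 hβ.2, sub_lt_self 1 hβ.1⟩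
  have h := sInf_cdf_le_iff (P.map X) hβ' x
  simp only [cdf_map_eq hX] at h
  exact h

theorem antitoneOn_VaR (hX : AEMeasurable X P) :
    AntitoneOn (fun β => VaR P β X) (Ioo (0 : ℝ) 1) := fun _ hα _ hβ hαβ =>
  (VaR_le_iff hX hβ _).2 ((sub_le_sub_left hαβ 1).trans ((VaR_le_iff hX hα _).1 le_rfl))

theorem volume_VaR_preimage_Iic (hX : AEMeasurable X P) (x : ℝ) :
    volume ((fun β => VaR P β X) ⁻¹' Iic x ∩ Ioo (0 : ℝ) 1) = P {ω | X ω ≤ x} := by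
  set p := P.real {ω | X ω ≤ x} with hp
  have preimage_eq : (fun β => VaR P β X) ⁻¹' Iic x ∩ Ioo (0 : ℝ) 1 = Ici (1 - p) ∩ Ioo 0 1 := by
    ext β
    refine and_congr_left fun hβ => (VaR_le_iff hX hβ x).trans ?_
    rw [mem_Ici, sub_le_comm]
  have ae_eq_Icc : (Ici (1 - p) ∩ Ioo 0 1 : Set ℝ) =ᵐ[volume] Icc (1 - p) 1 := by
    have h := (ae_eq_refl (Ici (1 - p))).inter (Ioo_ae_eq_Icc (μ := volume) (a := (0 : ℝ)) (b := 1))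
    rwa [← Ici_inter_Iic, ← inter_assoc, Ici_inter_Ici, Ici_inter_Iic,
      sup_eq_left.2 (sub_nonneg.2 measureReal_le_one)] at h
  rw [preimage_eq, measure_congr ae_eq_Icc, Real.volume_Icc, sub_sub_cancel, hp, ofReal_measureReal]

theorem identDistrib_VaR (hX : AEMeasurable X P) :
    IdentDistrib (fun β => VaR P β X) X (volume.restrict (Ioo (0 : ℝ) 1)) P := by
  have hVaR : AEMeasurable (fun β => VaR P β X) (volume.restrict (Ioo (0 : ℝ) 1)) :=
    aemeasurable_restrict_of_antitoneOn measurableSet_Ioo (antitoneOn_VaR hX)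
  refine ⟨hVaR, hX, Measure.ext_of_Iic _ _ fun x => ?_⟩
  rw [Measure.map_apply_of_aemeasurable hVaR measurableSet_Iic,
    Measure.map_apply_of_aemeasurable hX measurableSet_Iic,
    Measure.restrict_apply' measurableSet_Ioo, volume_VaR_preimage_Iic hX]
  rfl

theorem integral_posPart_VaR_sub (hX : AEMeasurable X P) {α : ℝ} (hα : α ∈ Ioo (0 : ℝ) 1) :
    ∫ β in Ioo 0 1, max (VaR P β X - VaR P α X) 0 =
      ∫ β in Ioo 0 α, (VaR P β X - VaR P α X) := by
  have hsub : Ioo 0 α ⊆ Ioo 0 1 := Ioo_subset_Ioo_right hα.2.le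
  rw [setIntegral_eq_of_subset_of_forall_sdiff_eq_zero measurableSet_Ioo hsub]
  · refine setIntegral_congr_fun measurableSet_Ioo fun β hβ => max_eq_left ?_
    exact sub_nonneg.2 (antitoneOn_VaR hX (hsub hβ) hα hβ.2.le)
  · rintro β ⟨hβ, hβα⟩
    have hαβ : α ≤ β := not_lt.1 fun h => hβα ⟨hβ.1, h⟩
    exact max_eq_right (sub_nonpos.2 (antitoneOn_VaR hX hα hβ hαβ))

theorem ES_eq_VaR_add_integral_posPart (hX : Integrable X P) {α : ℝ} (hα : α ∈ Ioo (0 : ℝ) 1) :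
    ES P α X = VaR P α X + 1 / α * ∫ ω, max (X ω - VaR P α X) 0 ∂P := by
  have same_law := identDistrib_VaR hX.aemeasurable
  have integral_posPart_eq :
      ∫ β in Ioo 0 1, max (VaR P β X - VaR P α X) 0 = ∫ ω, max (X ω - VaR P α X) 0 ∂P :=
    (same_law.comp (u := fun x => max (x - VaR P α X) 0) (by fun_prop)).integral_eq
  have integrable_VaR : IntegrableOn (fun β => VaR P β X) (Ioo 0 α) :=
    IntegrableOn.mono_set (same_law.integrable_iff.2 hX) (Ioo_subset_Ioo_right hα.2.le)
  rw [← integral_posPart_eq, integral_posPart_VaR_sub hX.aemeasurable hα,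
    integral_sub integrable_VaR (integrable_const _), setIntegral_const,
    Real.volume_real_Ioo_of_le hα.1.le, ES]
  have := hα.1.ne'
  simp only [smul_eq_mul, sub_zero]
  field_simp
  ring

theorem VaR_le_of_ae_le_compl (hX : AEMeasurable X P) (hA : MeasurableSet A)
    (hPA : P.real A ∈ Ioo (0 : ℝ) 1) {c : ℝ} (h : ∀ᵐ ω ∂P, ω ∉ A → X ω ≤ c) :
    VaR P (P.real A) X ≤ c := by
  rw [VaR_le_iff hX hPA, ← probReal_compl_eq_one_sub hA]
  exact ENNReal.toReal_mono (measure_ne_top _ _) (measure_mono_ae h)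

theorem le_VaR_of_ae_le (hX : AEMeasurable X P) (hA : MeasurableSet A) {β c : ℝ}
    (hβ : β ∈ Ioo 0 (P.real A)) (h : ∀ᵐ ω ∂P, ω ∈ A → c ≤ X ω) : c ≤ VaR P β X := by
  by_contra! hlt
  have hβ1 : β ∈ Ioo (0 : ℝ) 1 := ⟨hβ.1, hβ.2.trans_le measureReal_le_one⟩
  have mass_le : 1 - β ≤ 1 - P.real A := calc
    1 - β ≤ P.real {ω | X ω ≤ VaR P β X} := (VaR_le_iff hX hβ1 _).1 le_rfl
    _ ≤ P.real Aᶜ := ENNReal.toReal_mono (measure_ne_top _ _) <| measure_mono_ae <|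
      h.mono fun ω hω hle hωA => ((hω hωA).trans hle).not_gt hlt
    _ = 1 - P.real A := probReal_compl_eq_one_sub hA
  linarith [hβ.2]

theorem TailEvent.measureReal_mem_Ioo (hA : TailEvent P X A) : P.real A ∈ Ioo (0 : ℝ) 1 :=
  ⟨ENNReal.toReal_pos hA.2.1.ne' (measure_ne_top P A),
    ENNReal.toReal_lt_of_lt_ofReal (by simpa using hA.2.2.1)⟩

theorem TailEvent.ae_VaR_le (hX : AEMeasurable X P) (hA : TailEvent P X A) :
    ∀ᵐ ω ∂P, ω ∈ A → VaR P (P.real A) X ≤ X ω := by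
  obtain ⟨N, hN, hle⟩ := hA.2.2.2
  have notMem_N := measure_eq_zero_iff_ae_notMem.1 hN
  filter_upwards [notMem_N] with ω hωN hωA
  refine VaR_le_of_ae_le_compl hX hA.1 hA.measureReal_mem_Ioo ?_
  filter_upwards [notMem_N] with ω' hω'N hω'A using hle ω ⟨hωA, hωN⟩ ω' ⟨hω'A, hω'N⟩

theorem TailEvent.ae_le_VaR (hX : AEMeasurable X P) (hA : TailEvent P X A) :
    ∀ᵐ ω ∂P, ω ∉ A → X ω ≤ VaR P (P.real A) X := by
  obtain ⟨N, hN, hle⟩ := hA.2.2.2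
  have notMem_N := measure_eq_zero_iff_ae_notMem.1 hN
  by_cases hexceed : ∃ ω' ∈ Aᶜ \ N, VaR P (P.real A) X < X ω'
  · obtain ⟨ω', hω', hlt⟩ := hexceed
    -- All of `A` then lies above the quantile, so `{X ≤ VaR}`, of mass at least `P Aᶜ`, fills `Aᶜ`.
    have sublevel_le : {ω | X ω ≤ VaR P (P.real A) X} ≤ᵐ[P] Aᶜ := by
      filter_upwards [notMem_N] with ω hωN hωle hωA
      exact (hlt.trans_le (hle ω ⟨hωA, hωN⟩ ω' hω')).not_ge hωle
    have mass_ge : P Aᶜ ≤ P {ω | X ω ≤ VaR P (P.real A) X} := by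
      rw [← ENNReal.toReal_le_toReal (measure_ne_top _ _) (measure_ne_top _ _)]
      exact (probReal_compl_eq_one_sub hA.1).trans_le
        ((VaR_le_iff hX hA.measureReal_mem_Ioo _).1 le_rfl)
    exact (ae_eq_of_ae_subset_of_measure_ge sublevel_le mass_ge
      (nullMeasurableSet_le hX aemeasurable_const) (measure_ne_top _ _)).symm.le
  · push Not at hexceed
    filter_upwards [notMem_N] with ω hωN hωA using hexceed ω ⟨hωA, hωN⟩

theorem TailEvent.ES_eq_setAverage (hX : Integrable X P) (hA : TailEvent P X A) :
    ES P (P.real A) X = ⨍ ω in A, X ω ∂P := by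
  have integral_posPart_eq : ∫ ω, max (X ω - VaR P (P.real A) X) 0 ∂P =
      ∫ ω in A, (X ω - VaR P (P.real A) X) ∂P := by
    rw [← integral_indicator hA.1]
    refine integral_congr_ae ?_
    filter_upwards [hA.ae_VaR_le hX.aemeasurable, hA.ae_le_VaR hX.aemeasurable] with ω hge hle
    by_cases hω : ω ∈ A
    · rw [indicator_of_mem hω, max_eq_left (sub_nonneg.2 (hge hω))]
    · rw [indicator_of_notMem hω, max_eq_right (sub_nonpos.2 (hle hω))]
  rw [ES_eq_VaR_add_integral_posPart hX hA.measureReal_mem_Ioo, integral_posPart_eq,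
    integral_sub hX.integrableOn (integrable_const _), setIntegral_const, setAverage_eq]
  have := hA.measureReal_mem_Ioo.1.ne'
  simp only [smul_eq_mul]
  field_simp
  ring

section RandomVector

variable {n : ℕ} {X : Fin n → Ω → ℝ} {α : ℝ}

theorem Concentrated.VaR_sum_eq (h : Concentrated P X α) (hX : ∀ i, AEMeasurable (X i) P)
    (hα : α ∈ Ioo (0 : ℝ) 1)
    (hcont : ContinuousWithinAt (fun β => VaR P β (fun ω => ∑ i, X i ω)) (Iic α) α) :
    VaR P α (fun ω => ∑ i, X i ω) = ∑ i, VaR P α (X i) := by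
  obtain ⟨A, rfl, hT, hTS⟩ := h.exists_tailEvent_sum hα
  have hS : AEMeasurable (fun ω => ∑ i, X i ω) P := Finset.aemeasurable_fun_sum _ fun i _ => hX i
  refine le_antisymm (VaR_le_of_ae_le_compl hS hTS.1 hα ?_) ?_
  · filter_upwards [ae_all_iff.2 fun i => (hT i).ae_le_VaR (hX i)] with ω hω hωA
    exact Finset.sum_le_sum fun i _ => hω i hωA
  · have sum_le_on_A : ∀ᵐ ω ∂P, ω ∈ A → ∑ i, VaR P (P.real A) (X i) ≤ ∑ i, X i ω := by
      filter_upwards [ae_all_iff.2 fun i => (hT i).ae_VaR_le (hX i)] with ω hω hωA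
      exact Finset.sum_le_sum fun i _ => hω i hωA
    refine ge_of_tendsto (hcont.mono_left (nhdsWithin_mono _ Iio_subset_Iic_self)) ?_
    filter_upwards [Ioo_mem_nhdsLT hα.1] with β hβ using le_VaR_of_ae_le hS hTS.1 hβ sum_le_on_A

theorem Concentrated.ES_sum_eq (h : Concentrated P X α) (hX : ∀ i, Integrable (X i) P)
    (hα : α ∈ Ioo (0 : ℝ) 1) :
    ES P α (fun ω => ∑ i, X i ω) = ∑ i, ES P α (X i) := by
  obtain ⟨A, rfl, hT, hTS⟩ := h.exists_tailEvent_sum hα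
  simp only [hTS.ES_eq_setAverage (integrable_finsetSum _ fun i _ => hX i),
    fun i => (hT i).ES_eq_setAverage (hX i), setAverage_eq]
  rw [integral_finsetSum _ fun i _ => (hX i).integrableOn, Finset.smul_sum]

end RandomVector

end DQ

open DQ in
theorem stmt7_general {Ω : Type*} [MeasurableSpace Ω] (P : Measure Ω) [IsProbabilityMeasure P]
    (n : ℕ) (X : Fin n → Ω → ℝ) (hX : ∀ i, AEMeasurable (X i) P)
    (α : ℝ) (hα : α ∈ Set.Ioo (0 : ℝ) 1) (hconc : Concentrated P X α) :
    ((ContinuousWithinAt (fun β => VaR P β (fun ω => ∑ i, X i ω)) (Set.Iic α) α ∧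
        (∀ β ∈ Set.Ioo (0 : ℝ) α,
          VaR P α (fun ω => ∑ i, X i ω) < VaR P β (fun ω => ∑ i, X i ω))) →
      DQVaR P α X = 1) ∧
    (((∀ i, Integrable (X i) P) ∧
        (∀ β ∈ Set.Ioo (0 : ℝ) α,
          ES P α (fun ω => ∑ i, X i ω) < ES P β (fun ω => ∑ i, X i ω))) →
      DQES P α X = 1) :=
  ⟨fun ⟨hcont, hlt⟩ => DQVaR_eq_one_of_VaR_sum_eq hα (hconc.VaR_sum_eq hX hα hcont) hlt,
    fun ⟨hint, hlt⟩ => DQES_eq_one_of_ES_sum_eq hα (hconc.ES_sum_eq hint hα) hlt⟩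

open DQ in
/-- Let X be α-concentrated and S = X₁ + ⋯ + Xₙ.  If β ↦ VaR_β(S) is left continuous
at α and VaR_β(S) > VaR_α(S) for all β ∈ (0,α), then DQ^VaR_α(X) = 1.  Similarly, if
the Xᵢ are integrable and ES_β(S) > ES_α(S) for all β ∈ (0,α), then DQ^ES_α(X) = 1. -/
theorem stmt7 {Ω : Type*} [MeasurableSpace Ω] (P : Measure Ω) [IsProbabilityMeasure P]
    (hP : Atomless P) (n : ℕ) (X : Fin n → Ω → ℝ) (hX : ∀ i, Measurable (X i))
    (α : ℝ) (hα : α ∈ Set.Ioo (0 : ℝ) 1) (hconc : Concentrated P X α) :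
    ((ContinuousWithinAt (fun β => VaR P β (fun ω => ∑ i, X i ω)) (Set.Iic α) α ∧
        (∀ β ∈ Set.Ioo (0 : ℝ) α,
          VaR P α (fun ω => ∑ i, X i ω) < VaR P β (fun ω => ∑ i, X i ω))) →
      DQVaR P α X = 1) ∧
    (((∀ i, Integrable (X i) P) ∧
        (∀ β ∈ Set.Ioo (0 : ℝ) α,
          ES P α (fun ω => ∑ i, X i ω) < ES P β (fun ω => ∑ i, X i ω))) →
      DQES P α X = 1) :=
  stmt7_general P n X (fun i => (hX i).aemeasurable) α hα hconc
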